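/- There exists a Hadamard matrix of order 236; in particular, plugging near Williamson matrices of order 59 into the Williamson array (replacing A by AR, with R the 59×59 back circulant (0,1)-matrix whose first row is (0,…,0,1)) yields a 236×236 (-1,1)-matrix W with WWᵀ = 236·I. -/

import Mathlib

open Matrix

/-- `X` is circulant: `x_{ij} = x_{0, j-i}` with indices mod `n`. -/
def IsCirculant {n : ℕ} {α : Type*} (X : Matrix (ZMod n) (ZMod n) α) : Prop :=
  ∀ i j, X i j = X 0 (j - i)

/-- `X` is a `(-1,1)`-matrix. -/
def IsPM1 {n : ℕ} (X : Matrix (ZMod n) (ZMod n) ℝ) : Prop :=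
  ∀ i j, X i j = 1 ∨ X i j = -1

/-- `A, B, C, D` are near Williamson matrices of order `n`. -/
def IsNearWilliamson (n : ℕ) [NeZero n] (A B C D : Matrix (ZMod n) (ZMod n) ℝ) : Prop :=
  IsPM1 A ∧ IsPM1 B ∧ IsPM1 C ∧ IsPM1 D ∧
  IsCirculant A ∧ IsCirculant B ∧ IsCirculant C ∧ IsCirculant D ∧
  B.IsSymm ∧ C.IsSymm ∧ D.IsSymm ∧
  A * Aᵀ + B * Bᵀ + C * Cᵀ + D * Dᵀ = (4 * n : ℝ) • 1

/-- The back circulant `(0,1)`-matrix `R` whose first row is `(0, …, 0, 1)`. -/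
def Rmat (n : ℕ) : Matrix (ZMod n) (ZMod n) ℝ :=
  Matrix.of fun i j => if i + j = -1 then 1 else 0

/-!
Write `J` for the back circulant matrix `Rmat n`. For circulant `A` and `X` the product `A J X` is
symmetric, because `J X = Xᵀ J` and circulant times `J` is back circulant. This symmetry and the
commutativity of circulants are all that is needed to make the rows of the Goethals–Seidel array of
circulants `A, B, C, D` orthogonal. When `B, C, D` are symmetric that array, with its columns
permuted by `J`, is the Williamson array of `A J, B, C, D`. For general circulants it turns four
`±1` sequences whose periodic autocorrelations cancel into a Hadamard matrix, and for length 59 such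
sequences come from Turyn-type sequences of lengths 20, 20, 20, 19.
-/

section Array

variable {m R : Type*}

/-- The Williamson array of four square blocks. -/
def williamsonArray [Neg R] (A B C D : Matrix m m R) :
    Matrix ((m ⊕ m) ⊕ (m ⊕ m)) ((m ⊕ m) ⊕ (m ⊕ m)) R :=
  fromBlocks (fromBlocks A B (-B) A) (fromBlocks C D D (-C))
    (fromBlocks (-C) (-D) (-D) C) (fromBlocks A B (-B) A)

/-- The Goethals–Seidel array in column-permuted form: for `E = A J` with `J` the back circulant
permutation matrix `Rmat n`, the usual array with blocks `A, B J, C J, D J, Bᵀ J, …` is this one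
multiplied on the right by the block diagonal matrix of four copies of `J`. -/
def goethalsSeidelArray [Neg R] (E B C D : Matrix m m R) :
    Matrix ((m ⊕ m) ⊕ (m ⊕ m)) ((m ⊕ m) ⊕ (m ⊕ m)) R :=
  fromBlocks (fromBlocks E B (-B) E) (fromBlocks C D Dᵀ (-Cᵀ))
    (fromBlocks (-C) (-Dᵀ) (-D) Cᵀ) (fromBlocks E Bᵀ (-Bᵀ) E)

theorem goethalsSeidelArray_eq_williamsonArray [Neg R] (E : Matrix m m R) {B C D : Matrix m m R}
    (hB : B.IsSymm) (hC : C.IsSymm) (hD : D.IsSymm) :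
    goethalsSeidelArray E B C D = williamsonArray E B C D := by
  rw [goethalsSeidelArray, williamsonArray, hB.eq, hC.eq, hD.eq]

theorem goethalsSeidelArray_mul_transpose [Fintype m] [CommRing R] {S : Set (Matrix m m R)}
    (htranspose : ∀ X ∈ S, Xᵀ ∈ S) (hcomm : ∀ X ∈ S, ∀ Y ∈ S, X * Y = Y * X)
    {E B C D : Matrix m m R} (hE : ∀ X ∈ S, (E * X).IsSymm)
    (hB : B ∈ S) (hC : C ∈ S) (hD : D ∈ S) :
    let P := E * Eᵀ + B * Bᵀ + C * Cᵀ + D * Dᵀ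
    goethalsSeidelArray E B C D * (goethalsSeidelArray E B C D)ᵀ =
      fromBlocks (fromBlocks P 0 0 P) 0 0 (fromBlocks P 0 0 P) := by
  intro P
  have hE_swap {X : Matrix m m R} (hX : X ∈ S) : Xᵀ * Eᵀ = E * X := by
    rw [← transpose_mul, (hE X hX).eq]
  have hE_swap' {X : Matrix m m R} (hX : X ∈ S) : X * Eᵀ = E * Xᵀ := by
    simpa using hE_swap (htranspose X hX)
  have hBt := htranspose B hB
  have hCt := htranspose C hC
  have hDt := htranspose D hD
  simp only [goethalsSeidelArray, fromBlocks_transpose, fromBlocks_multiply, fromBlocks_add,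
    transpose_neg, transpose_transpose, Matrix.mul_neg, Matrix.neg_mul, neg_neg,
    hE_swap hB, hE_swap hC, hE_swap hD, hE_swap' hB, hE_swap' hC, hE_swap' hD,
    hcomm _ hC _ hB, hcomm _ hD _ hB, hcomm _ hD _ hC, hcomm _ hCt _ hB, hcomm _ hDt _ hB,
    hcomm _ hDt _ hC, hcomm _ hC _ hBt, hcomm _ hD _ hBt, hcomm _ hD _ hCt,
    hcomm _ hCt _ hBt, hcomm _ hDt _ hBt, hcomm _ hDt _ hCt, hcomm _ hBt _ hB,
    hcomm _ hCt _ hC, hcomm _ hDt _ hD, P]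
  rw [← fromBlocks_zero]
  congr 2 <;> abel

theorem goethalsSeidelArray_apply_eq_one_or_neg_one [Ring R] {E B C D : Matrix m m R}
    (hE : ∀ i j, E i j = 1 ∨ E i j = -1) (hB : ∀ i j, B i j = 1 ∨ B i j = -1)
    (hC : ∀ i j, C i j = 1 ∨ C i j = -1) (hD : ∀ i j, D i j = 1 ∨ D i j = -1) (i j) :
    goethalsSeidelArray E B C D i j = 1 ∨ goethalsSeidelArray E B C D i j = -1 := by
  rcases i with (i | i) | (i | i) <;> rcases j with (j | j) | (j | j) <;>
    simp [goethalsSeidelArray, neg_eq_iff_eq_neg, or_comm, hE, hB, hC, hD]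

theorem fromBlocks_diagonal_smul_one [DecidableEq m] [Semiring R] (c : R) :
    fromBlocks (fromBlocks (c • 1 : Matrix m m R) 0 0 (c • 1 : Matrix m m R)) 0 0
      (fromBlocks (c • 1 : Matrix m m R) 0 0 (c • 1 : Matrix m m R)) = c • 1 := by
  simp only [← fromBlocks_one, fromBlocks_smul, smul_zero]

theorem isHadamard_iff_of_trivialStar [Fintype m] [DecidableEq m] [Nonempty m] [CommRing R]
    [IsDomain R] [CharZero R] [StarRing R] [TrivialStar R] {H : Matrix m m R} :
    H.IsHadamard ↔
      (∀ i j, H i j = 1 ∨ H i j = -1) ∧ H * Hᵀ = (Fintype.card m : R) • 1 := by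
  have hcard : IsRegular (Fintype.card m : R) :=
    IsRegular.of_ne_zero (Nat.cast_ne_zero.2 Fintype.card_ne_zero)
  simp only [isHadamard_iff_mul_conjTranspose hcard, Unitary.mem_iff_eq_one_or_eq_neg_one,
    conjTranspose_eq_transpose_of_trivial]

end Array

section Circulant

variable {n : ℕ}

theorem isCirculant_iff_exists_circulant {α : Type*} {X : Matrix (ZMod n) (ZMod n) α} :
    IsCirculant X ↔ ∃ v, circulant v = X := by
  constructor
  · intro hX
    refine ⟨fun k ↦ X 0 (-k), ?_⟩
    ext i j
    rw [circulant_apply, neg_sub, hX i j]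
  · rintro ⟨v, rfl⟩ i j
    simp only [circulant_apply, zero_sub, neg_sub]

theorem isCirculant_circulant {α : Type*} (v : ZMod n → α) : IsCirculant (circulant v) :=
  isCirculant_iff_exists_circulant.2 ⟨v, rfl⟩

namespace IsCirculant

protected theorem transpose {α : Type*} {X : Matrix (ZMod n) (ZMod n) α} (hX : IsCirculant X) :
    IsCirculant Xᵀ := by
  obtain ⟨v, rfl⟩ := isCirculant_iff_exists_circulant.1 hX
  rw [transpose_circulant]
  exact isCirculant_circulant _

variable [NeZero n]

protected theorem mul {α : Type*} [NonUnitalNonAssocSemiring α] {X Y : Matrix (ZMod n) (ZMod n) α}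
    (hX : IsCirculant X) (hY : IsCirculant Y) : IsCirculant (X * Y) := by
  obtain ⟨v, rfl⟩ := isCirculant_iff_exists_circulant.1 hX
  obtain ⟨w, rfl⟩ := isCirculant_iff_exists_circulant.1 hY
  rw [circulant_mul]
  exact isCirculant_circulant _

protected theorem mul_comm {α : Type*} [NonUnitalCommSemiring α] {X Y : Matrix (ZMod n) (ZMod n) α}
    (hX : IsCirculant X) (hY : IsCirculant Y) : X * Y = Y * X := by
  obtain ⟨v, rfl⟩ := isCirculant_iff_exists_circulant.1 hX
  obtain ⟨w, rfl⟩ := isCirculant_iff_exists_circulant.1 hY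
  exact circulant_mul_comm v w

end IsCirculant

theorem Rmat_isSymm : (Rmat n).IsSymm := by
  ext i j
  simp only [Rmat, transpose_apply, of_apply, add_comm]

variable [NeZero n]

theorem mul_Rmat_apply (X : Matrix (ZMod n) (ZMod n) ℝ) (i j : ZMod n) :
    (X * Rmat n) i j = X i (-1 - j) := by
  simp [Matrix.mul_apply, Rmat, ← eq_sub_iff_add_eq]

theorem IsPM1.mul_Rmat {X : Matrix (ZMod n) (ZMod n) ℝ} (hX : IsPM1 X) :
    IsPM1 (X * Rmat n) := by
  intro i j
  rw [mul_Rmat_apply]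
  exact hX _ _

theorem Rmat_mul_self : Rmat n * Rmat n = 1 := by
  ext i j
  rw [mul_Rmat_apply, Matrix.one_apply, Rmat, of_apply]
  exact if_congr (by grind) rfl rfl

theorem mul_Rmat_mul_transpose (X : Matrix (ZMod n) (ZMod n) ℝ) :
    X * Rmat n * (X * Rmat n)ᵀ = X * Xᵀ := by
  rw [transpose_mul, Rmat_isSymm.eq, Matrix.mul_assoc, ← Matrix.mul_assoc (Rmat n),
    Rmat_mul_self, Matrix.one_mul]

namespace IsCirculant

variable {X Y : Matrix (ZMod n) (ZMod n) ℝ}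

theorem mul_Rmat_isSymm (hX : IsCirculant X) : (X * Rmat n).IsSymm := by
  ext i j
  rw [transpose_apply, mul_Rmat_apply, mul_Rmat_apply, hX i, hX j]
  congr 1
  abel

theorem Rmat_mul (hX : IsCirculant X) : Rmat n * X = Xᵀ * Rmat n := by
  rw [← hX.transpose.mul_Rmat_isSymm.eq, transpose_mul, transpose_transpose, Rmat_isSymm.eq]

theorem mul_Rmat_mul_isSymm (hX : IsCirculant X) (hY : IsCirculant Y) :
    (X * Rmat n * Y).IsSymm := by
  rw [Matrix.mul_assoc, hY.Rmat_mul, ← Matrix.mul_assoc]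
  exact (hX.mul hY.transpose).mul_Rmat_isSymm

end IsCirculant

theorem isHadamard_goethalsSeidelArray {A B C D : Matrix (ZMod n) (ZMod n) ℝ}
    (pmA : IsPM1 A) (pmB : IsPM1 B) (pmC : IsPM1 C) (pmD : IsPM1 D)
    (circA : IsCirculant A) (circB : IsCirculant B) (circC : IsCirculant C) (circD : IsCirculant D)
    (hsum : A * Aᵀ + B * Bᵀ + C * Cᵀ + D * Dᵀ = (4 * n : ℝ) • 1) :
    (goethalsSeidelArray (A * Rmat n) B C D).IsHadamard := by
  have hcard : (Fintype.card ((ZMod n ⊕ ZMod n) ⊕ (ZMod n ⊕ ZMod n)) : ℝ) = 4 * n := by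
    simp only [Fintype.card_sum, ZMod.card]
    push_cast
    ring
  refine isHadamard_iff_of_trivialStar.2
    ⟨goethalsSeidelArray_apply_eq_one_or_neg_one pmA.mul_Rmat pmB pmC pmD, ?_⟩
  rw [goethalsSeidelArray_mul_transpose (S := {X | IsCirculant X}) (fun _ hX ↦ hX.transpose)
    (fun _ hX _ hY ↦ hX.mul_comm hY) (fun _ hX ↦ circA.mul_Rmat_mul_isSymm hX) circB circC circD,
    mul_Rmat_mul_transpose, hsum, fromBlocks_diagonal_smul_one, hcard]

theorem IsNearWilliamson.isHadamard_williamsonArray {A B C D : Matrix (ZMod n) (ZMod n) ℝ}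
    (h : IsNearWilliamson n A B C D) : (williamsonArray (A * Rmat n) B C D).IsHadamard := by
  obtain ⟨pmA, pmB, pmC, pmD, circA, circB, circC, circD, symmB, symmC, symmD, hsum⟩ := h
  rw [← goethalsSeidelArray_eq_williamsonArray _ symmB symmC symmD]
  exact isHadamard_goethalsSeidelArray pmA pmB pmC pmD circA circB circC circD hsum

end Circulant

section Autocorrelation

variable {G R : Type*} [Fintype G]

/-- The periodic autocorrelation of the sequence `v` at shift `s`: the entries of
`circulant v * (circulant v)ᵀ`. -/
def periodicAutocorrelation [Add G] [NonUnitalNonAssocSemiring R] (v : G → R) (s : G) : R :=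
  ∑ k, v (k + s) * v k

theorem periodicAutocorrelation_intCast [Add G] [Ring R] (v : G → ℤ) (s : G) :
    periodicAutocorrelation (fun i ↦ (v i : R)) s = ((periodicAutocorrelation v s : ℤ) : R) := by
  simp only [periodicAutocorrelation, Int.cast_sum, Int.cast_mul]

theorem circulant_mul_transpose_self [AddCommGroup G] [NonUnitalNonAssocSemiring R] (v : G → R) :
    circulant v * (circulant v)ᵀ = circulant (periodicAutocorrelation v) := by
  ext i j
  simp only [Matrix.mul_apply, transpose_apply, circulant_apply, periodicAutocorrelation]
  refine Fintype.sum_equiv (Equiv.subLeft j) _ _ fun k ↦ ?_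
  simp only [Equiv.subLeft_apply, sub_add_sub_cancel']

theorem isHadamard_goethalsSeidelArray_circulant {n : ℕ} [NeZero n] {v : Fin 4 → ZMod n → ℤ}
    (hv : ∀ i k, v i k = 1 ∨ v i k = -1)
    (hsum : ∀ s, ∑ i, periodicAutocorrelation (v i) s = if s = 0 then 4 * (n : ℤ) else 0) :
    let X (i : Fin 4) : Matrix (ZMod n) (ZMod n) ℝ := circulant fun k ↦ (v i k : ℝ)
    (goethalsSeidelArray (X 0 * Rmat n) (X 1) (X 2) (X 3)).IsHadamard := by
  intro X
  have hX_pm (i : Fin 4) : IsPM1 (X i) := fun j k ↦ by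
    simp only [X, circulant_apply]
    exact_mod_cast hv i (j - k)
  have hX_circ (i : Fin 4) : IsCirculant (X i) := isCirculant_circulant _
  have hX_sum : ∑ i, X i * (X i)ᵀ = (4 * n : ℝ) • 1 := by
    ext j k
    simp only [X, circulant_mul_transpose_self, Matrix.sum_apply, circulant_apply,
      periodicAutocorrelation_intCast, ← Int.cast_sum, hsum, sub_eq_zero, Matrix.smul_apply,
      Matrix.one_apply]
    split_ifs <;> simp
  rw [Fin.sum_univ_four] at hX_sum
  exact isHadamard_goethalsSeidelArray (hX_pm 0) (hX_pm 1) (hX_pm 2) (hX_pm 3)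
    (hX_circ 0) (hX_circ 1) (hX_circ 2) (hX_circ 3) hX_sum

end Autocorrelation

section Turyn

/-- Four sequences of length `ℓ = 3n - 1` built from sequences `x, y, z, w` of lengths
`n, n, n, n - 1`. In the sum of their periodic autocorrelations at shift `s` the correlations
between different blocks cancel, leaving `2 (M s + M (ℓ - s))` for `0 < s < ℓ`, where
`M = N_x + N_y + 2 N_z + 2 N_w` is a combination of aperiodic autocorrelations; `x, y, z, w` are of
Turyn type when `M` vanishes at every nonzero shift. -/
def turynConcatenations (x y z w : List ℤ) : Fin 4 → List ℤ :=
  ![z ++ w ++ x, z ++ w.map (-·) ++ y, z ++ w ++ x.map (-·), z ++ w.map (-·) ++ y.map (-·)]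

/-- Four `±1` sequences of length 59 with cancelling periodic autocorrelations, obtained from
Turyn-type sequences of lengths 20, 20, 20, 19. -/
def complementarySequences59 (i : Fin 4) (k : ZMod 59) : ℤ :=
  (turynConcatenations
    [1, 1, 1, -1, 1, -1, -1, 1, -1, -1, 1, -1, 1, 1, 1, -1, -1, 1, 1, 1]
    [1, 1, 1, -1, -1, -1, 1, -1, -1, 1, 1, 1, 1, 1, -1, -1, 1, -1, -1, 1]
    [-1, -1, 1, -1, 1, -1, 1, 1, -1, -1, -1, 1, 1, 1, -1, 1, -1, -1, 1, 1]
    [-1, 1, 1, -1, -1, 1, -1, 1, -1, 1, 1, 1, 1, 1, 1, 1, 1, 1, -1] i).getD k.val 0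

theorem complementarySequences59_eq_one_or_neg_one (i : Fin 4) (k : ZMod 59) :
    complementarySequences59 i k = 1 ∨ complementarySequences59 i k = -1 := by
  decide +kernel +revert

theorem sum_periodicAutocorrelation_complementarySequences59 (s : ZMod 59) :
    ∑ i, periodicAutocorrelation (complementarySequences59 i) s =
      if s = 0 then 4 * ((59 : ℕ) : ℤ) else 0 := by
  decide +kernel +revert

end Turyn

/-- There exists a Hadamard matrix of order 236; in particular, for
any near Williamson matrices `A, B, C, D` of order 59, the Williamson array built
from `AR, B, C, D` is a `236 × 236` `(-1,1)`-matrix `W` with `WWᵀ = 236·I`. -/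
theorem exists_hadamard_236 :
    (∀ A B C D : Matrix (ZMod 59) (ZMod 59) ℝ, IsNearWilliamson 59 A B C D →
      let E := A * Rmat 59
      let W := Matrix.fromBlocks
        (Matrix.fromBlocks E B (-B) E) (Matrix.fromBlocks C D D (-C))
        (Matrix.fromBlocks (-C) (-D) (-D) C) (Matrix.fromBlocks E B (-B) E)
      (∀ i j, W i j = 1 ∨ W i j = -1) ∧ W * Wᵀ = (236 : ℝ) • 1) ∧
    ∃ H : Matrix (Fin 236) (Fin 236) ℝ,
      (∀ i j, H i j = 1 ∨ H i j = -1) ∧ H * Hᵀ = (236 : ℝ) • 1 := by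
  have hcard : Fintype.card ((ZMod 59 ⊕ ZMod 59) ⊕ (ZMod 59 ⊕ ZMod 59)) = 236 := by
    simp only [Fintype.card_sum, ZMod.card]
  constructor
  · intro A B C D h
    have hW := isHadamard_iff_of_trivialStar.1 h.isHadamard_williamsonArray
    simpa only [williamsonArray, hcard, Nat.cast_ofNat] using hW
  · have hH := isHadamard_goethalsSeidelArray_circulant complementarySequences59_eq_one_or_neg_one
      sum_periodicAutocorrelation_complementarySequences59
    let e := Fintype.equivFinOfCardEq hcard
    have hH_fin := isHadamard_iff_of_trivialStar.1 (hH.reindex e e)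
    rw [Fintype.card_fin, Nat.cast_ofNat] at hH_fin
    exact ⟨_, hH_fin⟩
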